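/- arXiv:2108.04729 — 4 statements merged into one kernel-verified Lean document; each statement's English description precedes it below -/
import Mathlib

section
/- Let n, k be integers with k ≥ 2 and k dividing n, let M be the zero-error matrix of an equipartition of [n] into k clusters, and let f_j ∈ ℝ^n denote the 0/1 indicator vector of the j-th cluster. For i ∈ {1,…,k−1} define v_i := (1/√(n/k))·( (1/√(i²+i))·Σ_{j=1}^{i} f_j − (i/√(i²+i))·f_{i+1} ). Then v_1,…,v_{k−1} are mutually orthogonal unit vectors, each v_i is an eigenvector of M with eigenvalue 2n/k, each v_i has equal coordinates on the vertices of each single cluster, and the coordinates of each v_i sum to 0. -/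
open scoped Classical

/-! An equipartition `c : V → Fin k` with clusters of size `m` lifts a vector `g` on the clusters to
the vector `m^(-1/2) • (g ∘ c)` on the vertices. The lift is isometric, and the zero-error matrix
acts on lifts of zero-sum vectors as the scalar `2m`. The `v_i` are the lifts of the Helmert
vectors, which form an orthonormal system of zero-sum vectors in `ℝ^k`. -/

open Finset Matrix

section Clusters

variable {V ι : Type*}

/-- The zero-error matrix of the clustering of `V` whose clusters are the fibres of `c`. -/
def zeroErrorMatrix (R : Type*) [One R] [Neg R] [DecidableEq ι] (c : V → ι) : Matrix V V R :=
  Matrix.of fun x y => if c x = c y then 1 else -1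

/-- The vector on the vertices taking the value `g j / √m` throughout the `j`-th cluster. The
factor makes lifting an isometry when every cluster has `m` vertices. -/
noncomputable def clusterLift (m : ℕ) (c : V → ι) (g : ι → ℝ) : V → ℝ :=
  (√m)⁻¹ • (g ∘ c)

variable [Fintype V] [Fintype ι] [DecidableEq ι] {c : V → ι} {m : ℕ}

lemma sum_comp_of_card_fiber_eq {A : Type*} [AddCommMonoid A] (hc : ∀ j, #{x | c x = j} = m)
    (g : ι → A) : ∑ x, g (c x) = m • ∑ j, g j := by
  simp only [← sum_fiberwise' univ c g, sum_const, hc, smul_sum]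

lemma zeroErrorMatrix_mulVec_comp {R : Type*} [Ring R] (hc : ∀ j, #{x | c x = j} = m) {g : ι → R}
    (hg : ∑ j, g j = 0) : zeroErrorMatrix R c *ᵥ (g ∘ c) = (2 * m : R) • (g ∘ c) := by
  funext x
  have split_sign (j : ι) : (if c x = j then 1 else -1) * g j
      = 2 * (if c x = j then g j else 0) - g j := by
    split_ifs <;> simp [two_mul]
  calc ∑ y, (if c x = c y then 1 else -1) * g (c y)
      = m • ∑ j, (if c x = j then 1 else -1) * g j :=
        sum_comp_of_card_fiber_eq hc fun j => (if c x = j then 1 else -1) * g j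
    _ = m • (2 * g (c x)) := by
        simp only [split_sign, sum_sub_distrib, ← mul_sum, sum_ite_eq, mem_univ, if_true, hg,
          sub_zero]
    _ = 2 * m * g (c x) := by
        rw [nsmul_eq_mul, ← mul_assoc, Nat.cast_comm]

lemma sum_clusterLift (hc : ∀ j, #{x | c x = j} = m) (g : ι → ℝ) :
    ∑ x, clusterLift m c g x = √m * ∑ j, g j := by
  simp only [clusterLift, Pi.smul_apply, Function.comp_apply, smul_eq_mul, ← mul_sum,
    sum_comp_of_card_fiber_eq hc, nsmul_eq_mul, ← mul_assoc]
  rw [← div_eq_inv_mul, Real.div_sqrt]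

lemma clusterLift_dotProduct_clusterLift (hm : m ≠ 0) (hc : ∀ j, #{x | c x = j} = m)
    (g h : ι → ℝ) : clusterLift m c g ⬝ᵥ clusterLift m c h = g ⬝ᵥ h := by
  have lift_sum : (g ∘ c) ⬝ᵥ (h ∘ c) = m * (g ⬝ᵥ h) := by
    rw [← nsmul_eq_mul]
    exact sum_comp_of_card_fiber_eq hc fun j => g j * h j
  have normalization : (√m)⁻¹ * ((√m)⁻¹ * m) = 1 := by
    rw [← mul_assoc, ← mul_inv, Real.mul_self_sqrt m.cast_nonneg,
      inv_mul_cancel₀ (Nat.cast_ne_zero.mpr hm)]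
  simp only [clusterLift, smul_dotProduct, dotProduct_smul, smul_eq_mul, lift_sum]
  linear_combination (g ⬝ᵥ h) * normalization

lemma zeroErrorMatrix_mulVec_clusterLift (hc : ∀ j, #{x | c x = j} = m) {g : ι → ℝ}
    (hg : ∑ j, g j = 0) :
    zeroErrorMatrix ℝ c *ᵥ clusterLift m c g = (2 * m : ℝ) • clusterLift m c g := by
  rw [clusterLift, mulVec_smul, zeroErrorMatrix_mulVec_comp hc hg, smul_comm]

end Clusters

section Helmert

variable {k : ℕ}

/-- The `i`-th row of the Helmert matrix of order `k`. Indices start at `0`, so the entries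
`0, …, i - 1` are equal and the entry `i` balances them; the row `i = 0`, constant in the usual
Helmert matrix, is `0` here. -/
noncomputable def helmertVector (i : Fin k) : Fin k → ℝ :=
  (√((i : ℝ) ^ 2 + i))⁻¹ • (∑ l ∈ Iio i, Pi.single l 1 - (i : ℝ) • Pi.single i 1)

lemma helmertVector_dotProduct (i : Fin k) (g : Fin k → ℝ) :
    helmertVector i ⬝ᵥ g = (√((i : ℝ) ^ 2 + i))⁻¹ * (∑ l ∈ Iio i, g l - i * g i) := by
  simp only [helmertVector, smul_dotProduct, sub_dotProduct, sum_dotProduct, single_dotProduct,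
    one_mul, smul_eq_mul]

lemma helmertVector_apply (i j : Fin k) :
    helmertVector i j = (√((i : ℝ) ^ 2 + i))⁻¹ *
      ((if j < i then 1 else 0) - i * (if j = i then 1 else 0)) := by
  simp [helmertVector, Finset.sum_apply, Pi.single_apply]

lemma helmertVector_apply_of_lt {i j : Fin k} (hji : j < i) :
    helmertVector i j = (√((i : ℝ) ^ 2 + i))⁻¹ := by
  simp [helmertVector_apply, hji, hji.ne]

lemma helmertVector_apply_self (i : Fin k) :
    helmertVector i i = -i * (√((i : ℝ) ^ 2 + i))⁻¹ := by
  simp [helmertVector_apply, mul_comm]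

lemma helmertVector_dotProduct_eq_zero_of_forall_le {i : Fin k} {g : Fin k → ℝ} {a : ℝ}
    (hg : ∀ l ≤ i, g l = a) : helmertVector i ⬝ᵥ g = 0 := by
  have sum_below : ∑ l ∈ Iio i, g l = i * a := by
    rw [sum_congr rfl fun l hl => hg l (mem_Iio.mp hl).le, sum_const, Fin.card_Iio, nsmul_eq_mul]
  rw [helmertVector_dotProduct, sum_below, hg i le_rfl, sub_self, mul_zero]

lemma sum_helmertVector (i : Fin k) : ∑ j, helmertVector i j = 0 := by
  rw [← dotProduct_one]
  exact helmertVector_dotProduct_eq_zero_of_forall_le fun _ _ => rfl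

lemma helmertVector_dotProduct_of_lt {i j : Fin k} (hij : i < j) :
    helmertVector i ⬝ᵥ helmertVector j = 0 :=
  helmertVector_dotProduct_eq_zero_of_forall_le fun _ hl =>
    helmertVector_apply_of_lt (hl.trans_lt hij)

lemma helmertVector_dotProduct_of_ne {i j : Fin k} (hij : i ≠ j) :
    helmertVector i ⬝ᵥ helmertVector j = 0 := by
  rcases hij.lt_or_gt with h | h
  · exact helmertVector_dotProduct_of_lt h
  · rw [dotProduct_comm, helmertVector_dotProduct_of_lt h]

lemma helmertVector_dotProduct_self {i : Fin k} (hi : (i : ℕ) ≠ 0) :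
    helmertVector i ⬝ᵥ helmertVector i = 1 := by
  have sum_below : ∑ l ∈ Iio i, helmertVector i l = i * (√((i : ℝ) ^ 2 + i))⁻¹ := by
    rw [sum_congr rfl fun l hl => helmertVector_apply_of_lt (mem_Iio.mp hl), sum_const,
      Fin.card_Iio, nsmul_eq_mul]
  rw [helmertVector_dotProduct, sum_below, helmertVector_apply_self]
  calc (√((i : ℝ) ^ 2 + i))⁻¹ *
        (i * (√((i : ℝ) ^ 2 + i))⁻¹ - i * (-i * (√((i : ℝ) ^ 2 + i))⁻¹))
      = (√((i : ℝ) ^ 2 + i) ^ 2)⁻¹ * ((i : ℝ) ^ 2 + i) := by ring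
    _ = 1 := by
      rw [Real.sq_sqrt (by positivity), inv_mul_cancel₀ (by positivity)]

lemma helmertVector_apply_eq_of_indicator {i j : Fin k} {e : ℕ → ℝ}
    (he : ∀ l ≤ (i : ℕ), e l = if (j : ℕ) = l then 1 else 0) :
    helmertVector i j = 1 / √((i : ℝ) ^ 2 + i) * ∑ l ∈ range i, e l -
      i / √((i : ℝ) ^ 2 + i) * e i := by
  have sum_indicator : ∑ l ∈ range i, e l = if j < i then 1 else 0 := by
    rw [sum_congr rfl fun l hl => he l (mem_range.mp hl).le]
    simp
  rw [helmertVector_apply, sum_indicator, he i le_rfl]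
  simp only [Fin.val_inj]
  ring

end Helmert

theorem stmt1 (n k : ℕ) (hk : 2 ≤ k) (hn : 0 < n) (hdvd : k ∣ n)
    (c : Fin n → Fin k)
    (hc : ∀ j : Fin k, (Finset.univ.filter fun i => c i = j).card = n / k)
    (M : Matrix (Fin n) (Fin n) ℝ)
    (hM : ∀ i j, M i j = if c i = c j then (1 : ℝ) else -1)
    (f : ℕ → Fin n → ℝ)
    -- `f j` (0-based index `j`, corresponding to the paper's `f_{j+1}`) is the 0/1
    -- indicator vector of the `j`-th cluster
    (hf : ∀ j : ℕ, j < k → ∀ i : Fin n, f j i = if (c i : ℕ) = j then (1 : ℝ) else 0)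
    (v : ℕ → Fin n → ℝ)
    -- `v i` for `1 ≤ i ≤ k-1` is the paper's `v_i`; with 1-based cluster indicators
    -- `f_j = f (j-1)`, so `Σ_{j=1}^{i} f_j = Σ_{j ∈ range i} f j` and `f_{i+1} = f i`.
    (hv : ∀ i : ℕ, 1 ≤ i → i ≤ k - 1 → ∀ x : Fin n,
      v i x = (1 / Real.sqrt ((n : ℝ) / k)) *
        ((1 / Real.sqrt ((i : ℝ) ^ 2 + i)) * (∑ j ∈ Finset.range i, f j x) -
          ((i : ℝ) / Real.sqrt ((i : ℝ) ^ 2 + i)) * f i x)) :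
    ∀ i : ℕ, 1 ≤ i → i ≤ k - 1 →
      (∑ x, v i x ^ 2 = 1) ∧
      (∀ j : ℕ, 1 ≤ j → j ≤ k - 1 → i ≠ j → ∑ x, v i x * v j x = 0) ∧
      (M.mulVec (v i) = ((2 * n : ℝ) / k) • v i) ∧
      (∀ x y : Fin n, c x = c y → v i x = v i y) ∧
      (∑ x, v i x = 0) := by
  have hm : ((n / k : ℕ) : ℝ) = n / k := Nat.cast_div hdvd (by positivity)
  have hm0 : n / k ≠ 0 := (Nat.div_pos (Nat.le_of_dvd hn hdvd) (by omega)).ne'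
  have hMc : M = zeroErrorMatrix ℝ c := Matrix.ext hM
  have hvc (i : Fin k) (hi : 1 ≤ (i : ℕ)) : v i = clusterLift (n / k) c (helmertVector i) := by
    funext x
    rw [hv i hi (by omega), ← hm, one_div,
      ← helmertVector_apply_eq_of_indicator fun l hl => hf l (hl.trans_lt i.isLt) x]
    rfl
  intro i hi hik
  lift i to Fin k using by omega
  rw [hMc, hvc i hi, mul_div_assoc, ← hm]
  refine ⟨?_, fun j hj hjk hij => ?_, ?_, fun x y hxy => ?_, ?_⟩
  · simp only [sq]
    exact (clusterLift_dotProduct_clusterLift hm0 hc _ _).trans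
      (helmertVector_dotProduct_self (by omega))
  · lift j to Fin k using by omega
    rw [hvc j hj]
    exact (clusterLift_dotProduct_clusterLift hm0 hc _ _).trans
      (helmertVector_dotProduct_of_ne (Fin.val_ne_iff.mp hij))
  · exact zeroErrorMatrix_mulVec_clusterLift hc (sum_helmertVector i)
  · exact congrArg (fun j => (√(n / k : ℕ))⁻¹ * helmertVector i j) hxy
  · rw [sum_clusterLift hc, sum_helmertVector, mul_zero]
end

section
/- Let n, k be integers with k ≥ 2 and k dividing n, and fix an equipartition of {1,…,n} into k clusters of size n/k. Let x ∈ ℝ^n be a unit vector (‖x‖₂ = 1) such that x is constant on each cluster (for each cluster, all coordinates of x indexed by that cluster are equal) and the coordinates of x sum to 0. Writing x^i for the common coordinate of x on the i-th cluster, there exist clusters i ≠ j with |x^i − x^j| > 1/(k·√n). -/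
open scoped Classical

/-! If all coordinates of `x` lie in `[m, M]`, then `∑ (x i - m) * (M - x i)` is nonnegative, which
bounds the variance of the coordinates by `(M - m) ^ 2 / 4` (Popoviciu's inequality). The
coordinates of a unit vector with zero sum have variance `1 / n`, so its largest and smallest
coordinates differ by at least `2 / √n`, and being distinct they belong to different clusters. -/

section Popoviciu

variable {ι R : Type*} [CommRing R] [LinearOrder R] [IsStrictOrderedRing R]

theorem sum_sq_le_add_mul_sum_sub_card_mul (s : Finset ι) (x : ι → R) {m M : R}
    (hm : ∀ i ∈ s, m ≤ x i) (hM : ∀ i ∈ s, x i ≤ M) :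
    ∑ i ∈ s, x i ^ 2 ≤ (m + M) * ∑ i ∈ s, x i - s.card * (m * M) := by
  have pointwise : ∀ i ∈ s, x i ^ 2 ≤ (m + M) * x i - m * M := fun i hi => by
    linarith [mul_nonneg (sub_nonneg.2 (hm i hi)) (sub_nonneg.2 (hM i hi))]
  calc ∑ i ∈ s, x i ^ 2 ≤ ∑ i ∈ s, ((m + M) * x i - m * M) := Finset.sum_le_sum pointwise
    _ = (m + M) * ∑ i ∈ s, x i - s.card * (m * M) := by
      rw [Finset.sum_sub_distrib, ← Finset.mul_sum, Finset.sum_const, nsmul_eq_mul]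

theorem four_mul_card_mul_sum_sq_sub_sq_sum_le (s : Finset ι) (x : ι → R) {m M : R}
    (hm : ∀ i ∈ s, m ≤ x i) (hM : ∀ i ∈ s, x i ≤ M) :
    4 * (s.card * ∑ i ∈ s, x i ^ 2 - (∑ i ∈ s, x i) ^ 2) ≤ (s.card * (M - m)) ^ 2 := by
  set S := ∑ i ∈ s, x i
  calc 4 * (s.card * ∑ i ∈ s, x i ^ 2 - S ^ 2)
      ≤ 4 * (s.card * ((m + M) * S - s.card * (m * M)) - S ^ 2) := by
        gcongr
        exact sum_sq_le_add_mul_sum_sub_card_mul s x hm hM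
    _ = (s.card * (M - m)) ^ 2 - (s.card * (m + M) - 2 * S) ^ 2 := by ring
    _ ≤ (s.card * (M - m)) ^ 2 := sub_le_self _ (sq_nonneg _)

end Popoviciu

theorem exists_two_div_sqrt_card_le_sub {ι : Type*} [Fintype ι] (x : ι → ℝ)
    (hunit : ∑ i, x i ^ 2 = 1) (hsum : ∑ i, x i = 0) :
    ∃ a b, 2 / √(Fintype.card ι) ≤ x a - x b := by
  have : Nonempty ι := by
    by_contra hι
    simp [not_nonempty_iff.1 hι] at hunit
  obtain ⟨a, ha⟩ := Finite.exists_max x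
  obtain ⟨b, hb⟩ := Finite.exists_min x
  refine ⟨a, b, ?_⟩
  have hcard : (0 : ℝ) < Fintype.card ι := Nat.cast_pos.2 Fintype.card_pos
  have variance_le : 4 * (Fintype.card ι : ℝ) ≤ (Fintype.card ι * (x a - x b)) ^ 2 := by
    simpa [hunit, hsum] using
      four_mul_card_mul_sum_sq_sub_sq_sum_le Finset.univ x (fun i _ => hb i) (fun i _ => ha i)
  refine le_of_sq_le_sq ?_ (sub_nonneg.2 (ha b))
  rw [div_pow, Real.sq_sqrt hcard.le, div_le_iff₀ hcard]
  refine le_of_mul_le_mul_right ?_ hcard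
  linarith

theorem stmt2_general {ι κ : Type*} [Fintype ι] (c : ι → κ) (x : ι → ℝ)
    (hunit : ∑ i, x i ^ 2 = 1) (hconst : x.FactorsThrough c) (hsum : ∑ i, x i = 0) :
    ∃ a b, c a ≠ c b ∧ 2 / √(Fintype.card ι) ≤ |x a - x b| := by
  obtain ⟨a, b, hab⟩ := exists_two_div_sqrt_card_le_sub x hunit hsum
  have : Nonempty ι := ⟨a⟩
  have hpos : 0 < x a - x b := lt_of_lt_of_le (by positivity) hab
  exact ⟨a, b, fun h => hpos.ne' (sub_eq_zero.2 (hconst h)), hab.trans (le_abs_self _)⟩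

theorem stmt2 (n k : ℕ) (hk : 2 ≤ k) (hn : 0 < n) (hdvd : k ∣ n)
    (c : Fin n → Fin k)
    (hc : ∀ j : Fin k, (Finset.univ.filter fun i => c i = j).card = n / k)
    (x : Fin n → ℝ)
    (hunit : ∑ i, x i ^ 2 = 1)
    (hconst : ∀ i j, c i = c j → x i = x j)
    (hsum : ∑ i, x i = 0) :
    ∃ a b : Fin n, c a ≠ c b ∧ 1 / (k * Real.sqrt n) < |x a - x b| := by
  obtain ⟨a, b, hab, hgap⟩ := stmt2_general c x hunit hconst hsum
  have hscale : 1 / (k * √n) < 2 / √n :=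
    div_lt_div₀ one_lt_two (le_mul_of_one_le_left (Real.sqrt_nonneg _)
      (Nat.one_le_cast.2 (one_le_two.trans hk))) zero_le_two (Real.sqrt_pos.2 (Nat.cast_pos.2 hn))
  exact ⟨a, b, hab, hscale.trans_le (by rwa [Fintype.card_fin] at hgap)⟩
end

section
/- Let n, k be integers with k > 2 and k dividing n, and let P be the positive semidefinite zero-error matrix of an equipartition of [n] into k clusters (P_{ij} = 1 if i,j in the same cluster, −1/(k−1) otherwise). Then: ‖P‖_F = n/√(k−1); ‖P‖_op = n/(k−1); ‖P‖_SDP = n²/(k−1); and ‖P‖_{∞→1} = n²/(k−1) if k is even, while ‖P‖_{∞→1} = n²·(k+1)/k² if k is odd. -/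
open scoped Classical

/-- The Frobenius norm of a real matrix. -/
noncomputable def frobNorm {n : ℕ} (A : Matrix (Fin n) (Fin n) ℝ) : ℝ :=
  Real.sqrt (∑ i, ∑ j, A i j ^ 2)

/-- The ℓ2 operator norm of a real matrix: the maximum of `‖Ax‖₂` over unit vectors `x`. -/
noncomputable def opNorm {n : ℕ} (A : Matrix (Fin n) (Fin n) ℝ) : ℝ :=
  sSup {r : ℝ | ∃ x : Fin n → ℝ, (∑ i, x i ^ 2) = 1 ∧
    r = Real.sqrt (∑ i, (A.mulVec x i) ^ 2)}

/-- The ℓ∞-to-ℓ1 norm of a real matrix: the maximum of `xᵀAy` over sign vectors `x, y`. -/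
noncomputable def inftyOneNorm {n : ℕ} (A : Matrix (Fin n) (Fin n) ℝ) : ℝ :=
  sSup {r : ℝ | ∃ x y : Fin n → ℝ, (∀ i, x i = 1 ∨ x i = -1) ∧
    (∀ i, y i = 1 ∨ y i = -1) ∧ r = ∑ i, ∑ j, x i * A i j * y j}

/-- The SDP norm of a real matrix: the maximum of `Σ_{i,j} A i j ⟪x i, y j⟫` over
families of unit vectors `x_1,…,x_n, y_1,…,y_n ∈ ℝ^n`. -/
noncomputable def sdpNorm {n : ℕ} (A : Matrix (Fin n) (Fin n) ℝ) : ℝ :=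
  sSup {r : ℝ | ∃ x y : Fin n → Fin n → ℝ, (∀ i, ∑ t, x i t ^ 2 = 1) ∧
    (∀ i, ∑ t, y i t ^ 2 = 1) ∧ r = ∑ i, ∑ j, A i j * ∑ t, x i t * y j t}

/-!
Let `S` be the Gram matrix of a regular simplex with `k` unit vertices; `P` is `S` with every vertex
repeated `m = n / k` times. Since `S` is `k / (k - 1)` times a projection, `P` is `n / (k - 1)`
times one, with unit diagonal. The C⋆-identity then gives the operator norm, each row of `P` has
squared length `n / (k - 1)`, and the SDP norm is at most `n` times the operator norm, with equality
at the normalised rows of `P`.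

For the ℓ∞-to-ℓ1 norm, repeating vertices only multiplies the value by `m ^ 2`, because a bilinear
form on the cube `[-m, m] ^ k` is maximal at vertices. As `S` is positive semidefinite, its maximum
is attained at equal sign vectors `x = y`, where the form is
`k / (k - 1) * (k - (∑ i, x i) ^ 2 / k)`; the smallest possible `|∑ i, x i|` is `0` or `1` according
to the parity of `k`.
-/

open Matrix

lemma dotProduct_mulVec_le_of_posSemidef {ι : Type*} [Fintype ι] {A : Matrix ι ι ℝ}
    (hA : A.PosSemidef) (x y : ι → ℝ) :
    x ⬝ᵥ A *ᵥ y ≤ (x ⬝ᵥ A *ᵥ x + y ⬝ᵥ A *ᵥ y) / 2 := by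
  have symm : y ⬝ᵥ A *ᵥ x = x ⬝ᵥ A *ᵥ y := by
    rw [dotProduct_mulVec, ← mulVec_transpose, dotProduct_comm,
      (isHermitian_iff_isSymm.mp hA.isHermitian).eq]
  have h := hA.dotProduct_mulVec_nonneg (x - y)
  simp only [star_trivial, mulVec_sub, sub_dotProduct, dotProduct_sub, symm] at h
  linarith

section Norm

open scoped Matrix.Norms.L2Operator

lemma norm_eq_of_isSelfAdjoint_of_mul_self_eq_smul {𝕜 E : Type*} [NormedField 𝕜]
    [NonUnitalNormedRing E] [StarRing E] [CStarRing E] [NormedSpace 𝕜 E] {a : E} {r : 𝕜}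
    (ha : IsSelfAdjoint a) (hsq : a * a = r • a) (ha0 : a ≠ 0) : ‖a‖ = ‖r‖ := by
  have h : ‖a‖ * ‖a‖ = ‖r‖ * ‖a‖ := by
    rw [← sq, ← ha.norm_mul_self, hsq, norm_smul]
  exact mul_right_cancel₀ (norm_ne_zero_iff.mpr ha0) h

lemma opNorm_eq_norm {n : ℕ} (A : Matrix (Fin n) (Fin n) ℝ) : opNorm A = ‖A‖ := by
  rw [cstar_norm_def, ← ContinuousLinearMap.sSup_sphere_eq_norm, opNorm]
  congr 1
  ext r
  constructor
  · rintro ⟨x, hx, rfl⟩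
    refine ⟨WithLp.toLp 2 x, ?_, ?_⟩
    · simp [EuclideanSpace.norm_eq, hx]
    · simp [EuclideanSpace.norm_eq]
  · rintro ⟨x, hx, rfl⟩
    refine ⟨x.ofLp, ?_, ?_⟩
    · simpa [EuclideanSpace.norm_eq] using hx
    · simp [EuclideanSpace.norm_eq]

lemma norm_toLp_sq {ι : Type*} [Fintype ι] (v : ι → ℝ) : ‖WithLp.toLp 2 v‖ ^ 2 = v ⬝ᵥ v := by
  simp [EuclideanSpace.norm_sq_eq, dotProduct, ← sq]

lemma dotProduct_mulVec_le_norm_mul {ι κ : Type*} [Fintype ι] [Fintype κ] [DecidableEq κ]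
    (A : Matrix ι κ ℝ) (x : ι → ℝ) (y : κ → ℝ) :
    x ⬝ᵥ A *ᵥ y ≤ ‖A‖ * ((x ⬝ᵥ x + y ⬝ᵥ y) / 2) := by
  calc x ⬝ᵥ A *ᵥ y = inner ℝ (WithLp.toLp 2 x) (WithLp.toLp 2 (A *ᵥ y)) := by
        simp [EuclideanSpace.inner_toLp_toLp, dotProduct_comm]
    _ ≤ ‖WithLp.toLp 2 x‖ * ‖WithLp.toLp 2 (A *ᵥ y)‖ := real_inner_le_norm _ _
    _ ≤ ‖WithLp.toLp 2 x‖ * (‖A‖ * ‖WithLp.toLp 2 y‖) := by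
        gcongr
        exact l2_opNorm_mulVec A (WithLp.toLp 2 y)
    _ = ‖A‖ * (‖WithLp.toLp 2 x‖ * ‖WithLp.toLp 2 y‖) := by ring
    _ ≤ ‖A‖ * ((x ⬝ᵥ x + y ⬝ᵥ y) / 2) := by
        gcongr
        rw [← norm_toLp_sq x, ← norm_toLp_sq y]
        linarith [two_mul_le_add_sq ‖WithLp.toLp 2 x‖ ‖WithLp.toLp 2 y‖]

lemma sum_columns_dotProduct_self {ι τ : Type*} [Fintype ι] [Fintype τ] {z : Matrix ι τ ℝ}
    (hz : ∀ i, z i ⬝ᵥ z i = 1) : ∑ t, zᵀ t ⬝ᵥ zᵀ t = Fintype.card ι := by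
  simp only [dotProduct, transpose_apply] at hz ⊢
  rw [Finset.sum_comm]
  simp [hz]

lemma sum_mul_dotProduct_le_norm_mul {ι κ τ : Type*} [Fintype ι] [Fintype κ] [DecidableEq κ]
    [Fintype τ] (A : Matrix ι κ ℝ) {x : Matrix ι τ ℝ} {y : Matrix κ τ ℝ}
    (hx : ∀ i, x i ⬝ᵥ x i = 1) (hy : ∀ j, y j ⬝ᵥ y j = 1) :
    ∑ i, ∑ j, A i j * (x i ⬝ᵥ y j) ≤ ‖A‖ * ((Fintype.card ι + Fintype.card κ) / 2) := by
  calc ∑ i, ∑ j, A i j * (x i ⬝ᵥ y j)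
      = ∑ t, xᵀ t ⬝ᵥ A *ᵥ yᵀ t := by
        simp only [dotProduct, mulVec, transpose_apply, Finset.mul_sum]
        rw [Finset.sum_comm_cycle]
        simp only [mul_left_comm]
    _ ≤ ∑ t, ‖A‖ * ((xᵀ t ⬝ᵥ xᵀ t + yᵀ t ⬝ᵥ yᵀ t) / 2) :=
        Finset.sum_le_sum fun t _ => dotProduct_mulVec_le_norm_mul A _ _
    _ = ‖A‖ * ((Fintype.card ι + Fintype.card κ) / 2) := by
        rw [← Finset.mul_sum, ← Finset.sum_div, Finset.sum_add_distrib,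
          sum_columns_dotProduct_self hx, sum_columns_dotProduct_self hy]

end Norm

section ScaledProjection

variable {r : ℝ}

lemma sum_sq_row_of_mul_self_eq_smul {ι : Type*} [Fintype ι] {A : Matrix ι ι ℝ}
    (hA : A.IsSymm) (hsq : A * A = r • A) (i : ι) : ∑ j, A i j ^ 2 = r * A i i := by
  calc ∑ j, A i j ^ 2 = (A * A) i i := by simp only [mul_apply, sq, hA.apply]
    _ = r * A i i := by simp [hsq]

variable {n : ℕ} {A : Matrix (Fin n) (Fin n) ℝ}

lemma opNorm_of_mul_self_eq_smul (hA : A.IsSymm) (hsq : A * A = r • A) (hA0 : A ≠ 0)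
    (hr : 0 ≤ r) : opNorm A = r := by
  open scoped Matrix.Norms.L2Operator in
  rw [opNorm_eq_norm,
    norm_eq_of_isSelfAdjoint_of_mul_self_eq_smul (isHermitian_iff_isSymm.mpr hA) hsq hA0,
    Real.norm_of_nonneg hr]

lemma opNorm_le_of_mul_self_eq_smul (hA : A.IsSymm) (hsq : A * A = r • A) (hr : 0 ≤ r) :
    opNorm A ≤ r := by
  open scoped Matrix.Norms.L2Operator in
  obtain rfl | hA0 := eq_or_ne A 0
  · rwa [opNorm_eq_norm, norm_zero]
  · exact (opNorm_of_mul_self_eq_smul hA hsq hA0 hr).le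

lemma frobNorm_of_mul_self_eq_smul (hA : A.IsSymm) (hsq : A * A = r • A)
    (hdiag : ∀ i, A i i = 1) : frobNorm A = √(n * r) := by
  simp [frobNorm, sum_sq_row_of_mul_self_eq_smul hA hsq, hdiag]

lemma sdpNorm_of_mul_self_eq_smul (hA : A.IsSymm) (hsq : A * A = r • A)
    (hdiag : ∀ i, A i i = 1) (hr : 0 < r) : sdpNorm A = n * r := by
  have gram_rows (i j : Fin n) : ∑ t, A i t / √r * (A j t / √r) = A i j := by
    calc ∑ t, A i t / √r * (A j t / √r) = (A * A) i j / r := by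
          simp only [mul_apply, Finset.sum_div, div_mul_div_comm, Real.mul_self_sqrt hr.le,
            hA.apply]
      _ = A i j := by simp [hsq, hr.ne']
  have unit_rows (i : Fin n) : ∑ t, (A i t / √r) ^ 2 = 1 := by
    simp only [sq, gram_rows, hdiag]
  refine IsGreatest.csSup_eq ⟨⟨fun i t => A i t / √r, fun i t => A i t / √r, unit_rows,
    unit_rows, ?_⟩, ?_⟩
  · simp [gram_rows, ← sq, sum_sq_row_of_mul_self_eq_smul hA hsq, hdiag]
  · rintro _ ⟨x, y, hx, hy, rfl⟩
    open scoped Matrix.Norms.L2Operator in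
    calc ∑ i, ∑ j, A i j * ∑ t, x i t * y j t
        ≤ ‖A‖ * ((Fintype.card (Fin n) + Fintype.card (Fin n)) / 2) :=
          sum_mul_dotProduct_le_norm_mul A (x := x) (y := y)
            (by simpa only [dotProduct, sq] using hx) (by simpa only [dotProduct, sq] using hy)
      _ = n * opNorm A := by rw [Fintype.card_fin, add_self_div_two, opNorm_eq_norm, mul_comm]
      _ ≤ n * r := by
          gcongr
          exact opNorm_le_of_mul_self_eq_smul hA hsq hr.le

lemma posSemidef_of_mul_self_eq_smul {ι : Type*} [Fintype ι] {A : Matrix ι ι ℝ}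
    (hA : A.IsSymm) (hsq : A * A = r • A) (hr : 0 < r) : A.PosSemidef := by
  have eq_smul : A = r⁻¹ • (Aᴴ * A) := by
    rw [conjTranspose_eq_transpose_of_trivial, hA.eq, hsq, inv_smul_smul₀ hr.ne']
  rw [eq_smul]
  exact (posSemidef_conjTranspose_mul_self A).smul (inv_nonneg.mpr hr.le)

end ScaledProjection

section SignVector

/-- A vector with entries `±1`, the points over which `inftyOneNorm` maximises. -/
def IsSignVector {ι : Type*} (x : ι → ℝ) : Prop := ∀ i, x i = 1 ∨ x i = -1

namespace IsSignVector

variable {ι κ : Type*} {x : ι → ℝ}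

lemma comp {s : κ → ℝ} (hs : IsSignVector s) (c : ι → κ) : IsSignVector (s ∘ c) :=
  fun i => hs (c i)

lemma abs_eq_one (hx : IsSignVector x) (i : ι) : |x i| = 1 := by
  rcases hx i with h | h <;> simp [h]

lemma finite_setOf [Finite ι] : {x : ι → ℝ | IsSignVector x}.Finite :=
  Set.Finite.pi' (t := fun _ => {1, -1}) fun _ => Set.toFinite _

variable [Fintype ι]

lemma dotProduct_self (hx : IsSignVector x) : x ⬝ᵥ x = Fintype.card ι := by
  simp [dotProduct, ← sq, ← sq_abs (x _), hx.abs_eq_one]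

lemma card_mod_two_le_sq_sum (hx : IsSignVector x) :
    ((Fintype.card ι % 2 : ℕ) : ℝ) ≤ (∑ i, x i) ^ 2 := by
  choose t ht using fun i => show ∃ t : ℤ, x i = 2 * t + 1 by
    rcases hx i with h | h
    · exact ⟨0, by simp [h]⟩
    · exact ⟨-1, by norm_num [h]⟩
  have sum_eq : ∑ i, x i = (2 * ∑ i, t i + Fintype.card ι : ℤ) := by
    simp [ht, Finset.sum_add_distrib, Finset.mul_sum]
  rw [sum_eq]
  rcases Nat.mod_two_eq_zero_or_one (Fintype.card ι) with h | h
  · rw [h, Nat.cast_zero]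
    positivity
  · have sum_ne : 2 * ∑ i, t i + (Fintype.card ι : ℤ) ≠ 0 := by omega
    rw [h]
    exact_mod_cast Int.add_one_le_of_lt (sq_pos_of_ne_zero sum_ne)

end IsSignVector

lemma exists_isSignVector_dotProduct_le {ι : Type*} [Fintype ι] {m : ℝ} {b : ι → ℝ}
    (hb : ∀ i, |b i| ≤ m) (v : ι → ℝ) : ∃ s, IsSignVector s ∧ b ⬝ᵥ v ≤ m * (s ⬝ᵥ v) := by
  refine ⟨fun i => if 0 ≤ v i then 1 else -1, fun i => by grind, ?_⟩
  rw [dotProduct, dotProduct, Finset.mul_sum]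
  refine Finset.sum_le_sum fun i _ => ?_
  calc b i * v i ≤ |b i| * |v i| := (le_abs_self _).trans_eq (abs_mul _ _)
    _ ≤ m * |v i| := by gcongr; exact hb i
    _ = m * ((if 0 ≤ v i then 1 else -1) * v i) := by
        split_ifs with h
        · rw [abs_of_nonneg h, one_mul]
        · rw [abs_of_neg (not_le.mp h), neg_one_mul]

end SignVector

section InftyOneNorm

variable {n : ℕ} {A : Matrix (Fin n) (Fin n) ℝ}

lemma isGreatest_inftyOneNorm (A : Matrix (Fin n) (Fin n) ℝ) :
    IsGreatest (Set.image2 (fun x y => x ⬝ᵥ A *ᵥ y) {x | IsSignVector x} {y | IsSignVector y})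
      (inftyOneNorm A) := by
  have inftyOneNorm_eq : inftyOneNorm A = sSup (Set.image2 (fun x y => x ⬝ᵥ A *ᵥ y)
      {x | IsSignVector x} {y | IsSignVector y}) := by
    simp only [inftyOneNorm, Set.image2, dotProduct, mulVec, Finset.mul_sum, mul_assoc,
      IsSignVector, Set.mem_ofPred_eq, eq_comm, exists_and_left]
  rw [inftyOneNorm_eq]
  have finite_values := IsSignVector.finite_setOf.image2 (fun x y => x ⬝ᵥ A *ᵥ y)
    (IsSignVector.finite_setOf (ι := Fin n))
  have one_mem : (1 : Fin n → ℝ) ∈ {x | IsSignVector x} := fun _ => Or.inl rfl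
  exact ⟨Set.Nonempty.csSup_mem ⟨_, Set.mem_image2_of_mem one_mem one_mem⟩ finite_values,
    fun _ h => le_csSup finite_values.bddAbove h⟩

lemma exists_isSignVector_inftyOneNorm_eq (A : Matrix (Fin n) (Fin n) ℝ) :
    ∃ x y, IsSignVector x ∧ IsSignVector y ∧ inftyOneNorm A = x ⬝ᵥ A *ᵥ y := by
  obtain ⟨x, hx, y, hy, h⟩ := (isGreatest_inftyOneNorm A).1
  exact ⟨x, y, hx, hy, h.symm⟩

lemma dotProduct_mulVec_le_inftyOneNorm {x y : Fin n → ℝ} (hx : IsSignVector x)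
    (hy : IsSignVector y) : x ⬝ᵥ A *ᵥ y ≤ inftyOneNorm A :=
  (isGreatest_inftyOneNorm A).2 (Set.mem_image2_of_mem hx hy)

lemma dotProduct_mulVec_le_sq_mul_inftyOneNorm {m : ℝ} (hm : 0 ≤ m) {a b : Fin n → ℝ}
    (ha : ∀ i, |a i| ≤ m) (hb : ∀ i, |b i| ≤ m) :
    a ⬝ᵥ A *ᵥ b ≤ m ^ 2 * inftyOneNorm A := by
  obtain ⟨s, hs, has⟩ := exists_isSignVector_dotProduct_le ha (A *ᵥ b)
  obtain ⟨t, ht, hbt⟩ := exists_isSignVector_dotProduct_le hb (s ᵥ* A)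
  calc a ⬝ᵥ A *ᵥ b ≤ m * (s ⬝ᵥ A *ᵥ b) := has
    _ = m * (b ⬝ᵥ s ᵥ* A) := by rw [dotProduct_mulVec, dotProduct_comm]
    _ ≤ m * (m * (t ⬝ᵥ s ᵥ* A)) := by gcongr
    _ = m ^ 2 * (s ⬝ᵥ A *ᵥ t) := by rw [dotProduct_mulVec, dotProduct_comm]; ring
    _ ≤ m ^ 2 * inftyOneNorm A := by
        gcongr
        exact dotProduct_mulVec_le_inftyOneNorm hs ht

end InftyOneNorm

section Blowup

variable {R ι κ : Type*} [Fintype ι] [DecidableEq κ]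

/-- The fibers of `c` partition `ι` into clusters of the same size `m`, labelled by `κ`. -/
def IsEquipartition (c : ι → κ) (m : ℕ) : Prop :=
  ∀ l, (Finset.univ.filter fun i => c i = l).card = m

/-- The sums of the entries of `x` over the clusters (the fibers) of `c`. -/
def clusterSum [AddCommMonoid R] (c : ι → κ) (x : ι → R) (l : κ) : R := ∑ i with c i = l, x i

lemma abs_clusterSum_le {c : ι → κ} {m : ℕ} (hc : IsEquipartition c m)
    {x : ι → ℝ} (hx : IsSignVector x) (l : κ) : |clusterSum c x l| ≤ m := by
  calc |clusterSum c x l| ≤ ∑ i with c i = l, |x i| := Finset.abs_sum_le_sum_abs _ _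
    _ = m := by simp [hx.abs_eq_one, hc l]

lemma clusterSum_comp [AddCommMonoid R] {c : ι → κ} {m : ℕ} (hc : IsEquipartition c m)
    (f : κ → R) : clusterSum c (f ∘ c) = m • f := by
  ext l
  calc clusterSum c (f ∘ c) l = ∑ i with c i = l, f l :=
        Finset.sum_congr rfl fun i hi => congrArg f (Finset.mem_filter.mp hi).2
    _ = (m • f) l := by simp [hc l]

variable [Fintype κ]

lemma sum_clusterSum [AddCommMonoid R] (c : ι → κ) (x : ι → R) :
    ∑ l, clusterSum c x l = ∑ i, x i :=
  Finset.sum_fiberwise _ _ _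

lemma IsEquipartition.card_eq {c : ι → κ} {m : ℕ} (hc : IsEquipartition c m) :
    Fintype.card ι = m * Fintype.card κ := by
  simpa [hc _, mul_comm] using Finset.card_eq_sum_card_fiberwise (f := c) (s := Finset.univ)
    (t := Finset.univ) (by simp)

lemma dotProduct_comp_eq_clusterSum_dotProduct [NonUnitalNonAssocSemiring R] (c : ι → κ)
    (x : ι → R) (v : κ → R) : x ⬝ᵥ (v ∘ c) = clusterSum c x ⬝ᵥ v := by
  simp only [dotProduct, clusterSum, Finset.sum_mul]
  rw [← Finset.sum_fiberwise _ c]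
  exact Finset.sum_congr rfl fun l _ => Finset.sum_congr rfl fun i hi => by
    rw [Function.comp_apply, (Finset.mem_filter.mp hi).2]

lemma dotProduct_submatrix_mulVec [CommSemiring R] (A : Matrix κ κ R) (c : ι → κ) (x y : ι → R) :
    x ⬝ᵥ A.submatrix c c *ᵥ y = clusterSum c x ⬝ᵥ A *ᵥ clusterSum c y := by
  have mulVec_eq : A.submatrix c c *ᵥ y = (A *ᵥ clusterSum c y) ∘ c := by
    ext i
    calc (A.submatrix c c *ᵥ y) i = y ⬝ᵥ (A (c i) ∘ c) := dotProduct_comm _ _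
      _ = clusterSum c y ⬝ᵥ A (c i) := dotProduct_comp_eq_clusterSum_dotProduct c y _
      _ = (A *ᵥ clusterSum c y) (c i) := dotProduct_comm _ _
  rw [mulVec_eq, dotProduct_comp_eq_clusterSum_dotProduct]

lemma submatrix_mul_submatrix_of_isEquipartition [NonUnitalNonAssocSemiring R] {c : ι → κ} {m : ℕ}
    (hc : IsEquipartition c m) (A B : Matrix κ κ R) :
    A.submatrix c c * B.submatrix c c = m • (A * B).submatrix c c := by
  ext i j
  calc ∑ t, A (c i) (c t) * B (c t) (c j)
      = ∑ l, clusterSum c ((fun l => A (c i) l * B l (c j)) ∘ c) l := (sum_clusterSum _ _).symm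
    _ = (m • (A * B).submatrix c c) i j := by
        simp [clusterSum_comp hc, mul_apply, Finset.smul_sum]

end Blowup

lemma inftyOneNorm_submatrix {n k m : ℕ} {c : Fin n → Fin k} (hc : IsEquipartition c m)
    (A : Matrix (Fin k) (Fin k) ℝ) :
    inftyOneNorm (A.submatrix c c) = m ^ 2 * inftyOneNorm A := by
  apply le_antisymm
  · obtain ⟨x, y, hx, hy, h⟩ := exists_isSignVector_inftyOneNorm_eq (A.submatrix c c)
    rw [h, dotProduct_submatrix_mulVec]
    exact dotProduct_mulVec_le_sq_mul_inftyOneNorm m.cast_nonneg (abs_clusterSum_le hc hx)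
      (abs_clusterSum_le hc hy)
  · obtain ⟨s, t, hs, ht, h⟩ := exists_isSignVector_inftyOneNorm_eq A
    calc (m : ℝ) ^ 2 * inftyOneNorm A = (s ∘ c) ⬝ᵥ A.submatrix c c *ᵥ (t ∘ c) := by
          rw [h, dotProduct_submatrix_mulVec, clusterSum_comp hc, clusterSum_comp hc]
          simp only [mulVec_smul, smul_dotProduct, dotProduct_smul, smul_smul, ← sq]
          rw [nsmul_eq_mul, Nat.cast_pow]
      _ ≤ inftyOneNorm (A.submatrix c c) :=
          dotProduct_mulVec_le_inftyOneNorm (hs.comp c) (ht.comp c)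

section Simplex

variable (κ : Type*) [Fintype κ] [DecidableEq κ]

/-- The Gram matrix of the vertices, labelled by `κ`, of a regular simplex inscribed in the unit
sphere and centred at the origin. The matrix of a partition `c` is its `submatrix c c`. -/
noncomputable def simplexGram : Matrix κ κ ℝ :=
  of fun i j => if i = j then 1 else -1 / ((Fintype.card κ : ℝ) - 1)

lemma isSymm_simplexGram : (simplexGram κ).IsSymm := by
  ext i j
  simp [simplexGram, eq_comm]

variable {κ} [Nontrivial κ]

lemma simplexGram_eq_smul :
    simplexGram κ = (Fintype.card κ / ((Fintype.card κ : ℝ) - 1)) •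
      (1 - of fun _ _ => 1 / (Fintype.card κ : ℝ)) := by
  have hcard : (1 : ℝ) < Fintype.card κ := by exact_mod_cast Fintype.one_lt_card
  have hcard' : (Fintype.card κ : ℝ) - 1 ≠ 0 := by linarith
  ext i j
  simp only [simplexGram, of_apply, Matrix.smul_apply, Matrix.sub_apply, one_apply, smul_eq_mul]
  split_ifs
  · field_simp
  · field_simp
    ring

lemma simplexGram_mulVec (x : κ → ℝ) :
    simplexGram κ *ᵥ x = (Fintype.card κ / ((Fintype.card κ : ℝ) - 1)) •
      (x - fun _ => (∑ i, x i) / Fintype.card κ) := by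
  rw [simplexGram_eq_smul, smul_mulVec, sub_mulVec, one_mulVec]
  congr 2
  ext i
  simp [mulVec, dotProduct, ← Finset.mul_sum, div_eq_inv_mul]

lemma dotProduct_simplexGram_mulVec (x y : κ → ℝ) :
    x ⬝ᵥ simplexGram κ *ᵥ y = Fintype.card κ / ((Fintype.card κ : ℝ) - 1) *
      (x ⬝ᵥ y - (∑ i, x i) * (∑ i, y i) / Fintype.card κ) := by
  have dotProduct_const (a : ℝ) : x ⬝ᵥ (fun _ => a) = (∑ i, x i) * a :=
    (Finset.sum_mul _ _ _).symm
  rw [simplexGram_mulVec, dotProduct_smul, dotProduct_sub, dotProduct_const, smul_eq_mul,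
    mul_div_assoc]

lemma sum_simplexGram_row (i : κ) : ∑ j, simplexGram κ i j = 0 := by
  simpa [mulVec, dotProduct] using congrFun (simplexGram_mulVec (1 : κ → ℝ)) i

lemma simplexGram_mul_self :
    simplexGram κ * simplexGram κ =
      (Fintype.card κ / ((Fintype.card κ : ℝ) - 1)) • simplexGram κ := by
  ext i j
  calc (simplexGram κ * simplexGram κ) i j = (simplexGram κ *ᵥ simplexGram κ j) i := by
        simp only [mul_apply, mulVec, dotProduct, (isSymm_simplexGram κ).apply]
    _ = Fintype.card κ / ((Fintype.card κ : ℝ) - 1) * simplexGram κ i j := by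
        simp [simplexGram_mulVec, sum_simplexGram_row, (isSymm_simplexGram κ).apply i j]

lemma submatrix_simplexGram_mul_self {ι : Type*} [Fintype ι] {c : ι → κ} {m : ℕ}
    (hc : IsEquipartition c m) :
    (simplexGram κ).submatrix c c * (simplexGram κ).submatrix c c =
      (Fintype.card ι / ((Fintype.card κ : ℝ) - 1)) • (simplexGram κ).submatrix c c := by
  rw [submatrix_mul_submatrix_of_isEquipartition hc, simplexGram_mul_self, submatrix_smul,
    Pi.smul_apply, Pi.smul_apply, ← Nat.cast_smul_eq_nsmul ℝ, smul_smul, hc.card_eq, Nat.cast_mul,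
    mul_div_assoc]

lemma posSemidef_simplexGram : (simplexGram κ).PosSemidef := by
  have hcard : (1 : ℝ) < Fintype.card κ := by exact_mod_cast Fintype.one_lt_card
  exact posSemidef_of_mul_self_eq_smul (isSymm_simplexGram κ) simplexGram_mul_self
    (div_pos (by linarith) (by linarith))

lemma dotProduct_simplexGram_mulVec_le {x y : κ → ℝ} (hx : IsSignVector x)
    (hy : IsSignVector y) :
    x ⬝ᵥ simplexGram κ *ᵥ y ≤ Fintype.card κ / ((Fintype.card κ : ℝ) - 1) *
      (Fintype.card κ - (Fintype.card κ % 2 : ℕ) / Fintype.card κ) := by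
  have hcard : (1 : ℝ) < Fintype.card κ := by exact_mod_cast Fintype.one_lt_card
  have diagonal_le {z : κ → ℝ} (hz : IsSignVector z) :
      z ⬝ᵥ simplexGram κ *ᵥ z ≤ Fintype.card κ / ((Fintype.card κ : ℝ) - 1) *
        (Fintype.card κ - (Fintype.card κ % 2 : ℕ) / Fintype.card κ) := by
    rw [dotProduct_simplexGram_mulVec, hz.dotProduct_self, ← sq]
    have : (0 : ℝ) ≤ Fintype.card κ / ((Fintype.card κ : ℝ) - 1) :=
      div_nonneg (by linarith) (by linarith)
    gcongr
    exact hz.card_mod_two_le_sq_sum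
  linarith [dotProduct_mulVec_le_of_posSemidef posSemidef_simplexGram x y, diagonal_le hx,
    diagonal_le hy]

end Simplex

lemma inftyOneNorm_simplexGram {k : ℕ} (hk : 1 < k) :
    inftyOneNorm (simplexGram (Fin k)) = k / ((k : ℝ) - 1) * (k - (k % 2 : ℕ) / k) := by
  have : Nontrivial (Fin k) := Fin.nontrivial_iff_two_le.mpr hk
  apply le_antisymm
  · obtain ⟨x, y, hx, hy, h⟩ := exists_isSignVector_inftyOneNorm_eq (simplexGram (Fin k))
    simpa [h] using dotProduct_simplexGram_mulVec_le hx hy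
  · let s : Fin k → ℝ := fun i => (-1) ^ (i : ℕ)
    have hs : IsSignVector s := fun i => neg_one_pow_eq_or ℝ _
    have sum_sq : (∑ i, s i) * (∑ i, s i) = (k % 2 : ℕ) := by
      rw [Fin.sum_univ_eq_sum_range (fun i => (-1 : ℝ) ^ i), neg_one_geom_sum]
      split_ifs with h
      · simp [Nat.even_iff.mp h]
      · simp [Nat.not_even_iff.mp h]
    have h := dotProduct_mulVec_le_inftyOneNorm (A := simplexGram (Fin k)) hs hs
    rwa [dotProduct_simplexGram_mulVec, hs.dotProduct_self, sum_sq, Fintype.card_fin] at h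

theorem stmt12 (n k : ℕ) (hk : 2 < k) (hn : 0 < n) (hdvd : k ∣ n)
    (c : Fin n → Fin k)
    (hc : ∀ j : Fin k, (Finset.univ.filter fun i => c i = j).card = n / k)
    (P : Matrix (Fin n) (Fin n) ℝ)
    (hP : ∀ i j, P i j = if c i = c j then (1 : ℝ) else -1 / ((k : ℝ) - 1)) :
    frobNorm P = n / Real.sqrt ((k : ℝ) - 1) ∧
    opNorm P = n / ((k : ℝ) - 1) ∧
    sdpNorm P = (n : ℝ) ^ 2 / ((k : ℝ) - 1) ∧
    (Even k → inftyOneNorm P = (n : ℝ) ^ 2 / ((k : ℝ) - 1)) ∧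
    (Odd k → inftyOneNorm P = (n : ℝ) ^ 2 * ((k : ℝ) + 1) / (k : ℝ) ^ 2) := by
  have hk1 : (0 : ℝ) < (k : ℝ) - 1 := sub_pos.mpr (by exact_mod_cast hk.trans' one_lt_two)
  have hnt : Nontrivial (Fin k) := Fin.nontrivial_iff_two_le.mpr hk.le
  have hm : ((n / k : ℕ) : ℝ) = n / k := Nat.cast_div hdvd (by positivity)
  have hr : 0 < (n : ℝ) / ((k : ℝ) - 1) := by positivity
  have hPS : P = (simplexGram (Fin k)).submatrix c c := by
    ext i j
    simp [hP, simplexGram]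
  have hsymm : P.IsSymm := hPS ▸ (isSymm_simplexGram (Fin k)).submatrix c
  have hdiag (i : Fin n) : P i i = 1 := by simp [hP]
  have hsq : P * P = ((n : ℝ) / ((k : ℝ) - 1)) • P := by
    simpa [hPS] using submatrix_simplexGram_mul_self hc
  have hne : P ≠ 0 := fun h => by simpa [h] using hdiag ⟨0, hn⟩
  refine ⟨?_, opNorm_of_mul_self_eq_smul hsymm hsq hne hr.le, ?_, fun hk2 => ?_, fun hk2 => ?_⟩
  · rw [frobNorm_of_mul_self_eq_smul hsymm hsq hdiag, ← mul_div_assoc,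
      Real.sqrt_div (by positivity), Real.sqrt_mul_self n.cast_nonneg]
  · rw [sdpNorm_of_mul_self_eq_smul hsymm hsq hdiag hr, sq, mul_div_assoc]
  · rw [hPS, inftyOneNorm_submatrix hc, inftyOneNorm_simplexGram (by omega), hm,
      Nat.even_iff.mp hk2]
    field_simp
    simp
  · rw [hPS, inftyOneNorm_submatrix hc, inftyOneNorm_simplexGram (by omega), hm,
      Nat.odd_iff.mp hk2]
    field_simp
    ring
end

section
/- Let n, k be integers with k > 2 and k dividing n, let P be the matrix with P_{ij} = 1 for i,j in the same cluster and −1/(k−1) otherwise, let ε > 0 and f ≥ 0. Let Q ∈ ℝ^{n×n} be a symmetric matrix with ‖Q − 2ε·P‖_{∞→1} ≤ f, and let X ∈ ℝ^{n×n} be a symmetric positive semidefinite matrix with X_{ii} = 1 for all i that attains the SDP norm of Q, i.e. Σ_{i,j} Q_{ij}·X_{ij} = ‖Q‖_SDP. Then Σ_{i,j} P_{ij}·X_{ij} ≥ n²/(k−1) − (2/ε)·f. -/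
open scoped Classical

/-!
Write `D = Q - 2εP` and `A • B` for the Frobenius inner product. As `P` is feasible for the
semidefinite program maximised by `X`, we have `Q • P ≤ Q • X`, that is
`2ε (P • P - P • X) ≤ D • X - D • P`. Grothendieck's inequality with constant `2` bounds `D • X` and
`-D • P` by `2f` each, and `P • P ≥ n² / (k - 1)`.

Grothendieck's inequality comes from Krivine's argument. All Taylor coefficients of `sinh ± sin` are
nonnegative, so every Gram matrix `X` of unit vectors yields centred Gaussian vectors `U`, `V` with
standard normal coordinates and `cov(U i, V j) = sin (arsinh 1 * X i j)`. Sheppard's formula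
`E[sign U sign V] = (2 / π) arcsin (cov(U, V))` turns their signs into random sign vectors `x`, `y`
with `E[xᵀAy] = (2 arsinh 1 / π) A • X`, and `arsinh 1 ≥ arctan 1 = π / 4`.
-/

section Sheppard

open MeasureTheory ProbabilityTheory Real Set

lemma real_sign_mul (x y : ℝ) : sign (x * y) = sign x * sign y := by
  obtain hx | rfl | hx := lt_trichotomy x 0 <;> obtain hy | rfl | hy := lt_trichotomy y 0 <;>
    simp [sign_of_neg, sign_of_pos, mul_pos_of_neg_of_neg, mul_neg_of_neg_of_pos,
      mul_neg_of_pos_of_neg, *]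

lemma measurable_real_sign : Measurable sign :=
  measurable_const.ite measurableSet_Iio (measurable_const.ite measurableSet_Ioi measurable_const)

lemma norm_real_sign_le_one (x : ℝ) : ‖sign x‖ ≤ 1 := by
  obtain h | h | h := sign_apply_eq x <;> simp [h]

lemma integrable_real_sign_comp {Ω : Type*} [MeasurableSpace Ω] {μ : Measure Ω} [IsFiniteMeasure μ]
    {u : Ω → ℝ} (hu : AEMeasurable u μ) : Integrable (fun ω ↦ sign (u ω)) μ :=
  .of_bound (measurable_real_sign.comp_aemeasurable hu).aestronglyMeasurable 1
    (ae_of_all _ fun ω ↦ norm_real_sign_le_one (u ω))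

lemma intervalIntegrable_real_sign_comp {u : ℝ → ℝ} (hu : Measurable u) (a b : ℝ) :
    IntervalIntegrable (fun t ↦ sign (u t)) volume a b :=
  (intervalIntegrable_const (c := (1 : ℝ))).mono_fun
    (measurable_real_sign.comp hu).aestronglyMeasurable
    (ae_of_all _ fun t ↦ by simpa only [norm_one] using norm_real_sign_le_one (u t))

lemma integral_sign_sin_add {α : ℝ} (hα : α ∈ Icc (-(π / 2)) (π / 2)) :
    ∫ t in -(π / 2)..π / 2, sign (sin (t + α)) = 2 * α := by
  obtain ⟨hα₁, hα₂⟩ := hα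
  have hneg : EqOn (fun t ↦ sign (sin (t + α))) (fun _ ↦ -1) (Ioo (-(π / 2)) (-α)) :=
    fun t ht ↦ sign_of_neg (sin_neg_of_neg_of_neg_pi_lt (by linarith [ht.2]) (by linarith [ht.1]))
  have hpos : EqOn (fun t ↦ sign (sin (t + α))) (fun _ ↦ 1) (Ioo (-α) (π / 2)) :=
    fun t ht ↦ sign_of_pos (sin_pos_of_pos_of_lt_pi (by linarith [ht.1]) (by linarith [ht.2]))
  have hint := intervalIntegrable_real_sign_comp (u := fun t ↦ sin (t + α)) (by fun_prop)
  rw [← intervalIntegral.integral_add_adjacent_intervals (hint _ (-α)) (hint _ _),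
    intervalIntegral.integral_congr_Ioo_of_le (by linarith) hneg,
    intervalIntegral.integral_congr_Ioo_of_le (by linarith) hpos]
  simp only [intervalIntegral.integral_const, smul_eq_mul]
  ring

lemma integral_sign_cos_mul_sign_sin_add {α : ℝ} (hα : α ∈ Icc (-(π / 2)) (π / 2)) :
    ∫ t in -π..π, sign (cos t) * sign (sin (t + α)) = 4 * α := by
  set g : ℝ → ℝ := fun t ↦ sign (cos t) * sign (sin (t + α))
  have hper : Function.Periodic g π := fun t ↦ by
    simp only [g, add_right_comm t π α, cos_add_pi, sin_add_pi, sign_neg, neg_mul_neg]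
  have hcos : EqOn g (fun t ↦ sign (sin (t + α))) (Ioo (-(π / 2)) (π / 2)) := fun t ht ↦ by
    simp only [g, sign_of_pos (cos_pos_of_mem_Ioo ht), one_mul]
  calc ∫ t in -π..π, g t
      = (2 : ℤ) • ∫ t in -(π / 2)..-(π / 2) + π, g t := by
        rw [hper.intervalIntegral_add_eq (-(π / 2)) (-π),
          ← hper.intervalIntegral_add_zsmul_eq 2 (-π)]
        · congr 1
          rw [zsmul_eq_mul]
          push_cast
          ring
        · simp only [g, ← real_sign_mul]
          exact intervalIntegrable_real_sign_comp (by fun_prop)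
    _ = 4 * α := by
        rw [show -(π / 2) + π = π / 2 by ring,
          intervalIntegral.integral_congr_Ioo_of_le (by linarith [pi_pos]) hcos,
          integral_sign_sin_add hα]
        rw [zsmul_eq_mul]
        push_cast
        ring

lemma gaussianReal_prod_eq_withDensity : (gaussianReal 0 1).prod (gaussianReal 0 1) =
    volume.withDensity (fun p : ℝ × ℝ ↦ gaussianPDF 0 1 p.1 * gaussianPDF 0 1 p.2) := by
  rw [gaussianReal_of_var_ne_zero 0 one_ne_zero,
    prod_withDensity (measurable_gaussianPDF 0 1) (measurable_gaussianPDF 0 1)]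
  rfl

lemma gaussianPDFReal_mul_gaussianPDFReal (x y : ℝ) :
    gaussianPDFReal 0 1 x * gaussianPDFReal 0 1 y =
      (2 * π)⁻¹ * rexp (-(x ^ 2 + y ^ 2) / 2) := by
  simp only [gaussianPDFReal, NNReal.coe_one, mul_one, sub_zero]
  rw [mul_mul_mul_comm, ← mul_inv, mul_self_sqrt (by positivity), ← exp_add]
  ring_nf

lemma integral_gaussianReal_prod_of_homogeneous {F : ℝ × ℝ → ℝ}
    (hF : ∀ r > 0, ∀ x y, F (r * x, r * y) = F (x, y)) :
    ∫ p, F p ∂(gaussianReal 0 1).prod (gaussianReal 0 1) =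
      (2 * π)⁻¹ * ∫ t in -π..π, F (cos t, sin t) := by
  have hradial : ∫ r in Ioi (0 : ℝ), r * rexp (-r ^ 2 / 2) = 1 := by
    have h := integral_rpow_mul_exp_neg_mul_rpow
      (p := 2) (q := 1) (b := 1 / 2) (by norm_num) (by norm_num) (by norm_num)
    norm_num at h
    rw [← h]
    refine setIntegral_congr_fun measurableSet_Ioi fun r _ ↦ ?_
    ring_nf
  have hdensity : ∀ r > 0, ∀ t, r * ((gaussianPDF 0 1 (r * cos t) *
      gaussianPDF 0 1 (r * sin t)).toReal * F (r * cos t, r * sin t)) =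
      r * rexp (-r ^ 2 / 2) * ((2 * π)⁻¹ * F (cos t, sin t)) := fun r hr t ↦ by
    rw [hF r hr, ENNReal.toReal_mul, toReal_gaussianPDF, toReal_gaussianPDF,
      gaussianPDFReal_mul_gaussianPDFReal, mul_pow, mul_pow, ← mul_add, cos_sq_add_sin_sq]
    ring_nf
  rw [gaussianReal_prod_eq_withDensity, integral_withDensity_eq_integral_toReal_smul
      (by fun_prop) (ae_of_all _ fun _ ↦ ENNReal.mul_lt_top gaussianPDF_lt_top gaussianPDF_lt_top),
    ← integral_comp_polarCoord_symm, polarCoord_target, Measure.volume_eq_prod]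
  calc _ = ∫ p in Ioi 0 ×ˢ Ioo (-π) π,
        p.1 * rexp (-p.1 ^ 2 / 2) * ((2 * π)⁻¹ * F (cos p.2, sin p.2)) ∂volume.prod volume :=
        setIntegral_congr_fun (measurableSet_Ioi.prod measurableSet_Ioo) fun p hp ↦
          hdensity p.1 hp.1 p.2
    _ = _ := by
        rw [setIntegral_prod_mul (fun r ↦ r * rexp (-r ^ 2 / 2))
          (fun t ↦ (2 * π)⁻¹ * F (cos t, sin t)), hradial, one_mul, integral_const_mul,
          intervalIntegral.integral_of_le (by linarith [pi_pos]), integral_Ioc_eq_integral_Ioo]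

lemma integral_gaussianReal_prod_sign_mul_sign {α : ℝ} (hα : α ∈ Icc (-(π / 2)) (π / 2)) :
    ∫ p, sign p.1 * sign (sin α * p.1 + cos α * p.2)
      ∂(gaussianReal 0 1).prod (gaussianReal 0 1) = 2 / π * α := by
  rw [integral_gaussianReal_prod_of_homogeneous
    (F := fun p ↦ sign p.1 * sign (sin α * p.1 + cos α * p.2))]
  · have hsin (t : ℝ) : sin α * cos t + cos α * sin t = sin (t + α) := by rw [sin_add]; ring
    simp only [hsin, integral_sign_cos_mul_sign_sin_add hα]
    field_simp
    norm_num
  · intro r hr x y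
    rw [show sin α * (r * x) + cos α * (r * y) = r * (sin α * x + cos α * y) by ring]
    simp only [real_sign_mul r, sign_of_pos hr, one_mul]

variable {Ω : Type*} [MeasurableSpace Ω] {μ : Measure Ω} {U V : Ω → ℝ}

lemma map_prodMk_sub_sin_mul (hUV : HasGaussianLaw (fun ω ↦ (U ω, V ω)) μ)
    (hU : HasLaw U (gaussianReal 0 1) μ) (hV : HasLaw V (gaussianReal 0 1) μ) {α : ℝ}
    (hcov : cov[U, V; μ] = sin α) :
    μ.map (fun ω ↦ (U ω, V ω - sin α * U ω)) =
      (gaussianReal 0 1).prod ((gaussianReal 0 1).map (cos α * ·)) := by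
  have := hUV.isProbabilityMeasure
  have hU₂ := hUV.fst.memLp_two
  have hV₂ := hUV.snd.memLp_two
  have hvarU : Var[U; μ] = 1 := hU.variance_eq.trans variance_id_gaussianReal
  have hvarV : Var[V; μ] = 1 := hV.variance_eq.trans variance_id_gaussianReal
  have hUW : HasGaussianLaw (fun ω ↦ (U ω, V ω - sin α * U ω)) μ :=
    hUV.map_fun ((ContinuousLinearMap.fst ℝ ℝ ℝ).prod
      (ContinuousLinearMap.snd ℝ ℝ ℝ - sin α • ContinuousLinearMap.fst ℝ ℝ ℝ))
  have hindep : IndepFun U (fun ω ↦ V ω - sin α * U ω) μ := by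
    refine hUW.indepFun_of_covariance_eq_zero ?_
    rw [covariance_fun_sub_right hU₂ hV₂ (hU₂.const_mul _), covariance_const_mul_right,
      covariance_self hU.aemeasurable, hcov, hvarU, mul_one, sub_self]
  have hmean : ∫ ω, V ω - sin α * U ω ∂μ = 0 := by
    rw [integral_sub hUV.snd.integrable (hUV.fst.integrable.const_mul _), integral_const_mul,
      hU.integral_eq, hV.integral_eq, integral_id_gaussianReal, mul_zero, sub_zero]
  have hvar : Var[fun ω ↦ V ω - sin α * U ω; μ] = cos α ^ 2 := by
    rw [variance_fun_sub hV₂ (hU₂.const_mul _), variance_const_mul, covariance_const_mul_right,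
      covariance_comm, hcov, hvarU, hvarV, cos_sq']
    ring
  rw [(indepFun_iff_map_prod_eq_prod_map_map hU.aemeasurable hUW.snd.aemeasurable).1 hindep,
    hU.map_eq, hUW.snd.map_eq_gaussianReal, hmean, hvar, gaussianReal_map_const_mul, mul_zero,
    mul_one, toNNReal_of_nonneg (sq_nonneg (cos α))]

theorem integral_sign_mul_sign_of_hasGaussianLaw (hUV : HasGaussianLaw (fun ω ↦ (U ω, V ω)) μ)
    (hU : HasLaw U (gaussianReal 0 1) μ) (hV : HasLaw V (gaussianReal 0 1) μ) {α : ℝ}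
    (hα : α ∈ Icc (-(π / 2)) (π / 2)) (hcov : cov[U, V; μ] = sin α) :
    ∫ ω, sign (U ω) * sign (V ω) ∂μ = 2 / π * α := by
  have hF : Measurable (fun p : ℝ × ℝ ↦ sign p.1 * sign (sin α * p.1 + p.2)) :=
    (measurable_real_sign.comp (by fun_prop)).mul (measurable_real_sign.comp (by fun_prop))
  have hscale : Measurable (Prod.map id (cos α * ·) : ℝ × ℝ → ℝ × ℝ) := by fun_prop
  calc ∫ ω, sign (U ω) * sign (V ω) ∂μ
      = ∫ p, sign p.1 * sign (sin α * p.1 + p.2) ∂μ.map (fun ω ↦ (U ω, V ω - sin α * U ω)) := by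
        have hU' := hU.aemeasurable
        have hV' := hV.aemeasurable
        rw [integral_map (by fun_prop) hF.aestronglyMeasurable]
        simp only [add_sub_cancel]
    _ = ∫ p, sign p.1 * sign (sin α * p.1 + p.2)
          ∂((gaussianReal 0 1).prod (gaussianReal 0 1)).map (Prod.map id (cos α * ·)) := by
        rw [map_prodMk_sub_sin_mul hUV hU hV hcov,
          ← Measure.map_prod_map _ _ measurable_id (by fun_prop), Measure.map_id]
    _ = ∫ p, sign p.1 * sign (sin α * p.1 + cos α * p.2)
          ∂(gaussianReal 0 1).prod (gaussianReal 0 1) :=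
        integral_map hscale.aemeasurable hF.aestronglyMeasurable
    _ = 2 / π * α := integral_gaussianReal_prod_sign_mul_sign hα

end Sheppard

section CorrelationMatrix

open Matrix Real

variable {ι : Type*}

lemma posSemidef_map_pow {X : Matrix ι ι ℝ} (hX : X.PosSemidef) (m : ℕ) :
    (X.map (· ^ m)).PosSemidef := by
  induction m with
  | zero =>
    convert (PosSemidef.one (n := Unit) (R := ℝ)).submatrix fun _ : ι ↦ () using 1
    ext i j
    simp
  | succ m ih =>
    have hpow : X.map (· ^ (m + 1)) = X.map (· ^ m) ⊙ X := ext fun i j ↦ pow_succ (X i j) m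
    exact hpow ▸ ih.hadamard hX

lemma posSemidef_map_of_hasSum {a : ℕ → ℝ} (ha : ∀ m, 0 ≤ a m) {e : ℕ → ℕ} {φ : ℝ → ℝ}
    (hφ : ∀ x, HasSum (fun m ↦ a m * x ^ e m) (φ x)) {X : Matrix ι ι ℝ} (hX : X.PosSemidef) :
    (X.map φ).PosSemidef := by
  refine ⟨hX.isHermitian.map φ fun _ ↦ rfl, fun z ↦ ?_⟩
  have hsum : HasSum
      (fun m ↦ z.sum fun i zi ↦ z.sum fun j zj ↦ star zi * (a m • X.map (· ^ e m)) i j * zj)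
      (z.sum fun i zi ↦ z.sum fun j zj ↦ star zi * X.map φ i j * zj) :=
    hasSum_sum fun i _ ↦ hasSum_sum fun j _ ↦ ((hφ (X i j)).mul_left _).mul_right _
  exact hsum.nonneg fun m ↦ ((posSemidef_map_pow hX (e m)).smul (ha m)).2 z

lemma posSemidef_map_sinh_add_sin {X : Matrix ι ι ℝ} (hX : X.PosSemidef) :
    (X.map sinh + X.map sin).PosSemidef := by
  have hcoeff (m : ℕ) : (0 : ℝ) ≤ (1 + (-1) ^ m) / (2 * m + 1).factorial := by
    obtain h | h := neg_one_pow_eq_or ℝ m <;> rw [h] <;> positivity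
  refine posSemidef_map_of_hasSum hcoeff (e := fun m ↦ 2 * m + 1) (φ := fun x ↦ sinh x + sin x)
    (fun x ↦ ?_) hX
  simpa only [div_mul_eq_mul_div, add_mul, one_mul, add_div] using
    (hasSum_sinh x).add (hasSum_sin x)

lemma posSemidef_map_sinh_sub_sin {X : Matrix ι ι ℝ} (hX : X.PosSemidef) :
    (X.map sinh - X.map sin).PosSemidef := by
  have hcoeff (m : ℕ) : (0 : ℝ) ≤ (1 - (-1) ^ m) / (2 * m + 1).factorial := by
    obtain h | h := neg_one_pow_eq_or ℝ m <;> (rw [h]; norm_num; try positivity)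
  refine posSemidef_map_of_hasSum hcoeff (e := fun m ↦ 2 * m + 1) (φ := fun x ↦ sinh x - sin x)
    (fun x ↦ ?_) hX
  simpa only [div_mul_eq_mul_div, sub_mul, one_mul, sub_div] using
    (hasSum_sinh x).sub (hasSum_sin x)

lemma posSemidef_fromBlocks_of_add_of_sub {A B : Matrix ι ι ℝ} (hadd : (A + B).PosSemidef)
    (hsub : (A - B).PosSemidef) : (fromBlocks A B B A).PosSemidef := by
  have hplus := hadd.submatrix (Sum.elim id id)
  have hsign := (posSemidef_vecMulVec_self_star ![(1 : ℝ), -1]).submatrix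
    (Sum.elim (fun _ : ι ↦ 0) fun _ : ι ↦ 1)
  have hminus := (hsub.submatrix (Sum.elim id id)).hadamard hsign
  convert (hplus.add hminus).smul (show (0 : ℝ) ≤ 1 / 2 by norm_num) using 1
  ext (i | i) (j | j) <;> simp <;> ring

/-- A correlation matrix, that is a Gram matrix of unit vectors, encoded as a positive semidefinite
real matrix with unit diagonal: these are the feasible points of the semidefinite program whose
optimal value is `sdpNorm`. -/
structure IsCorrelationMatrix (X : Matrix ι ι ℝ) : Prop where
  posSemidef : X.PosSemidef
  diag_eq_one : ∀ i, X i i = 1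

/-- Krivine's transform: if `X` is the Gram matrix of unit vectors `x i`, this is the Gram matrix of
unit vectors `u i` and `v i` such that `⟪u i, v j⟫ = sin (arsinh 1 * ⟪x i, x j⟫)`. The factor
`arsinh 1` is the one for which the `u i` and the `v i` have length one. -/
noncomputable def krivineMatrix (X : Matrix ι ι ℝ) : Matrix (ι ⊕ ι) (ι ⊕ ι) ℝ :=
  fromBlocks ((arsinh 1 • X).map sinh) ((arsinh 1 • X).map sin)
    ((arsinh 1 • X).map sin) ((arsinh 1 • X).map sinh)

namespace IsCorrelationMatrix

variable {X : Matrix ι ι ℝ}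

lemma abs_apply_le_one (hX : IsCorrelationMatrix X) (i j : ι) : |X i j| ≤ 1 := by
  have hdet := (hX.posSemidef.submatrix ![i, j]).det_nonneg
  have hsymm : X j i = X i j := hX.posSemidef.isHermitian.apply i j
  simp only [det_fin_two, submatrix_apply, cons_val_zero, cons_val_one, hX.diag_eq_one, hsymm]
    at hdet
  exact abs_le_one_iff_mul_self_le_one.2 (by linarith)

open scoped MatrixOrder Matrix.Norms.L2Operator in
lemma exists_gram [Fintype ι] (hX : IsCorrelationMatrix X) :
    ∃ x : ι → ι → ℝ, (∀ i, ∑ t, x i t ^ 2 = 1) ∧ ∀ i j, ∑ t, x i t * x j t = X i j := by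
  obtain ⟨B, hB⟩ := CStarAlgebra.nonneg_iff_eq_star_mul_self.1 hX.posSemidef.nonneg
  have hgram (i j : ι) : ∑ t, B t i * B t j = X i j := by
    rw [hB, mul_apply]
    rfl
  exact ⟨fun i t ↦ B t i, fun i ↦ by simpa only [sq, hX.diag_eq_one] using hgram i i, hgram⟩

end IsCorrelationMatrix

lemma isCorrelationMatrix_krivineMatrix {X : Matrix ι ι ℝ} (hX : IsCorrelationMatrix X) :
    IsCorrelationMatrix (krivineMatrix X) where
  posSemidef :=
    have hc : (arsinh 1 • X).PosSemidef := hX.posSemidef.smul (arsinh_nonneg_iff.2 zero_le_one)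
    posSemidef_fromBlocks_of_add_of_sub (posSemidef_map_sinh_add_sin hc)
      (posSemidef_map_sinh_sub_sin hc)
  diag_eq_one := by
    rintro (i | i) <;> simp [krivineMatrix, hX.diag_eq_one]

end CorrelationMatrix

section Norms

variable {n : ℕ}

lemma le_inftyOneNorm (A : Matrix (Fin n) (Fin n) ℝ) {x y : Fin n → ℝ}
    (hx : ∀ i, x i = 1 ∨ x i = -1) (hy : ∀ i, y i = 1 ∨ y i = -1) :
    ∑ i, ∑ j, x i * A i j * y j ≤ inftyOneNorm A := by
  refine le_csSup ⟨∑ i, ∑ j, |A i j|, ?_⟩ ⟨x, y, hx, hy, rfl⟩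
  rintro _ ⟨x, y, hx, hy, rfl⟩
  refine Finset.sum_le_sum fun i _ ↦ Finset.sum_le_sum fun j _ ↦ ?_
  rcases hx i with h | h <;> rcases hy j with h' | h' <;> simp [h, h', le_abs_self, neg_le_abs]

lemma inftyOneNorm_neg (A : Matrix (Fin n) (Fin n) ℝ) : inftyOneNorm (-A) = inftyOneNorm A := by
  have hflip {x : Fin n → ℝ} (hx : ∀ i, x i = 1 ∨ x i = -1) (i) : (-x) i = 1 ∨ (-x) i = -1 := by
    simpa [neg_eq_iff_eq_neg] using (hx i).symm
  unfold inftyOneNorm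
  congr 1
  ext r
  constructor <;> rintro ⟨x, y, hx, hy, rfl⟩ <;> exact ⟨-x, y, hflip hx, hy, by simp⟩

lemma inftyOneNorm_nonneg (A : Matrix (Fin n) (Fin n) ℝ) : 0 ≤ inftyOneNorm A := by
  have hpos := le_inftyOneNorm A (x := 1) (y := 1) (by simp) (by simp)
  have hneg := le_inftyOneNorm A (x := -1) (y := 1) (by simp) (by simp)
  simp only [Pi.neg_apply, Pi.one_apply, neg_mul, Finset.sum_neg_distrib] at hpos hneg
  linarith

lemma abs_sum_mul_le_one {ι : Type*} [Fintype ι] {x y : ι → ℝ} (hx : ∑ t, x t ^ 2 = 1)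
    (hy : ∑ t, y t ^ 2 = 1) : |∑ t, x t * y t| ≤ 1 := by
  have h := Finset.sum_mul_sq_le_sq_mul_sq Finset.univ x y
  rwa [hx, hy, one_mul, sq_le_one_iff_abs_le_one] at h

lemma IsCorrelationMatrix.sum_mul_le_sdpNorm {X : Matrix (Fin n) (Fin n) ℝ}
    (hX : IsCorrelationMatrix X) (A : Matrix (Fin n) (Fin n) ℝ) :
    ∑ i, ∑ j, A i j * X i j ≤ sdpNorm A := by
  obtain ⟨x, hx, hgram⟩ := hX.exists_gram
  refine le_csSup ⟨∑ i, ∑ j, |A i j|, ?_⟩ ⟨x, x, hx, hx, by simp only [hgram]⟩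
  rintro _ ⟨x, y, hx, hy, rfl⟩
  refine Finset.sum_le_sum fun i _ ↦ Finset.sum_le_sum fun j _ ↦ ?_
  refine (le_abs_self _).trans ?_
  rw [abs_mul]
  exact mul_le_of_le_one_right (abs_nonneg _) (abs_sum_mul_le_one (hx i) (hy j))

end Norms

section Grothendieck

open MeasureTheory ProbabilityTheory Real Set

namespace IsCorrelationMatrix

variable {κ : Type*} [Fintype κ] {K : Matrix κ κ ℝ}

lemma hasLaw_eval_multivariateGaussian (hK : IsCorrelationMatrix K) (i : κ) :
    HasLaw (fun g ↦ g i) (gaussianReal 0 1) (multivariateGaussian 0 K) := by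
  have h := (measurePreserving_eval_multivariateGaussian (μ := 0) hK.posSemidef (i := i)).hasLaw
  rwa [hK.diag_eq_one, toNNReal_one] at h

lemma ae_eval_ne_zero (hK : IsCorrelationMatrix K) (i : κ) :
    ∀ᵐ g ∂multivariateGaussian 0 K, g i ≠ 0 := by
  have := nullSingletonClass_gaussianReal (μ := 0) one_ne_zero
  refine ((hK.hasLaw_eval_multivariateGaussian i).ae_iff ?_).2 (Measure.ae_ne _ 0)
  fun_prop

lemma integral_sign_mul_sign (hK : IsCorrelationMatrix K) {α : ℝ}
    (hα : α ∈ Icc (-(π / 2)) (π / 2)) {i j : κ} (hij : K i j = sin α) :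
    ∫ g, sign (g i) * sign (g j) ∂multivariateGaussian 0 K = 2 / π * α := by
  have hgauss : HasGaussianLaw (fun g : EuclideanSpace ℝ κ ↦ (g i, g j))
      (multivariateGaussian 0 K) :=
    IsGaussian.hasGaussianLaw_id.map_fun ((EuclideanSpace.proj i).prod (EuclideanSpace.proj j))
  refine integral_sign_mul_sign_of_hasGaussianLaw hgauss (hK.hasLaw_eval_multivariateGaussian i)
    (hK.hasLaw_eval_multivariateGaussian j) hα ?_
  rw [covariance_eval_multivariateGaussian hK.posSemidef, hij]

end IsCorrelationMatrix

lemma arctan_le_arsinh {x : ℝ} (hx : 0 ≤ x) : arctan x ≤ arsinh x := by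
  have hmono : Monotone fun x ↦ arsinh x - arctan x := by
    refine monotone_of_hasDerivAt_nonneg
      (fun x ↦ (hasDerivAt_arsinh x).sub (hasDerivAt_arctan' x)) fun x ↦ ?_
    have hsqrt : √(1 + x ^ 2) ≤ 1 + x ^ 2 := sqrt_le_self_iff.2 (.inr (by nlinarith))
    exact sub_nonneg.2 (inv_anti₀ (by positivity) hsqrt)
  simpa using hmono hx

variable {n : ℕ} {X : Matrix (Fin n) (Fin n) ℝ}

lemma sum_integral_sign_le_inftyOneNorm {Ω : Type*} [MeasurableSpace Ω] {μ : Measure Ω}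
    [IsProbabilityMeasure μ] (A : Matrix (Fin n) (Fin n) ℝ) {U V : Fin n → Ω → ℝ}
    (hU : ∀ i, AEMeasurable (U i) μ) (hV : ∀ j, AEMeasurable (V j) μ)
    (hU₀ : ∀ i, ∀ᵐ ω ∂μ, U i ω ≠ 0) (hV₀ : ∀ j, ∀ᵐ ω ∂μ, V j ω ≠ 0) :
    ∑ i, ∑ j, A i j * ∫ ω, sign (U i ω) * sign (V j ω) ∂μ ≤ inftyOneNorm A := by
  have hint (i j : Fin n) : Integrable (fun ω ↦ sign (U i ω) * A i j * sign (V j ω)) μ := by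
    simp only [mul_right_comm _ (A i j), ← real_sign_mul]
    exact (integrable_real_sign_comp ((hU i).mul (hV j))).mul_const _
  calc ∑ i, ∑ j, A i j * ∫ ω, sign (U i ω) * sign (V j ω) ∂μ
      = ∫ ω, ∑ i, ∑ j, sign (U i ω) * A i j * sign (V j ω) ∂μ := by
        rw [integral_finsetSum _ fun i _ ↦ integrable_finsetSum _ fun j _ ↦ hint i j]
        refine Finset.sum_congr rfl fun i _ ↦ ?_
        rw [integral_finsetSum _ fun j _ ↦ hint i j]
        refine Finset.sum_congr rfl fun j _ ↦ ?_
        rw [← integral_const_mul]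
        simp only [mul_right_comm _ (A i j), mul_comm (A i j)]
    _ ≤ ∫ _, inftyOneNorm A ∂μ := by
        refine integral_mono_ae
          (integrable_finsetSum _ fun i _ ↦ integrable_finsetSum _ fun j _ ↦ hint i j)
          (integrable_const _) ?_
        filter_upwards [ae_all_iff.2 hU₀, ae_all_iff.2 hV₀] with ω hU hV
        exact le_inftyOneNorm A (fun i ↦ (sign_apply_eq_of_ne_zero _ (hU i)).symm)
          fun j ↦ (sign_apply_eq_of_ne_zero _ (hV j)).symm
    _ = inftyOneNorm A := by simp

lemma arsinh_one_mul_mem_Icc {t : ℝ} (ht : |t| ≤ 1) :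
    arsinh 1 * t ∈ Icc (-(π / 2)) (π / 2) := by
  have h₀ : 0 ≤ arsinh 1 := arsinh_nonneg_iff.2 zero_le_one
  have h₁ : arsinh 1 ≤ 1 := by simpa only [sinh_arsinh] using self_le_sinh_iff.2 h₀
  refine abs_le.1 ?_
  calc |arsinh 1 * t| = arsinh 1 * |t| := by rw [abs_mul, abs_of_nonneg h₀]
    _ ≤ 1 := mul_le_one₀ h₁ (abs_nonneg t) ht
    _ ≤ π / 2 := one_le_pi_div_two

theorem IsCorrelationMatrix.sum_mul_le_inftyOneNorm (hX : IsCorrelationMatrix X)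
    (A : Matrix (Fin n) (Fin n) ℝ) :
    ∑ i, ∑ j, A i j * X i j ≤ π / (2 * arsinh 1) * inftyOneNorm A := by
  have hK := isCorrelationMatrix_krivineMatrix hX
  have hpos : 0 < arsinh 1 := arsinh_pos_iff.2 one_pos
  have hsheppard (i j : Fin n) : ∫ g, sign (g (.inl i)) * sign (g (.inr j))
      ∂multivariateGaussian 0 (krivineMatrix X) = 2 / π * (arsinh 1 * X i j) :=
    hK.integral_sign_mul_sign (arsinh_one_mul_mem_Icc (hX.abs_apply_le_one i j)) rfl
  calc ∑ i, ∑ j, A i j * X i j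
      = π / (2 * arsinh 1) * ∑ i, ∑ j, A i j * (2 / π * (arsinh 1 * X i j)) := by
        simp only [Finset.mul_sum]
        refine Finset.sum_congr rfl fun i _ ↦ Finset.sum_congr rfl fun j _ ↦ ?_
        field_simp
    _ ≤ π / (2 * arsinh 1) * inftyOneNorm A := by
        simp only [← hsheppard]
        gcongr
        exact sum_integral_sign_le_inftyOneNorm A (fun i ↦ by fun_prop) (fun j ↦ by fun_prop)
          (fun i ↦ hK.ae_eval_ne_zero _) (fun j ↦ hK.ae_eval_ne_zero _)

theorem IsCorrelationMatrix.sum_mul_le_two_mul_inftyOneNorm (hX : IsCorrelationMatrix X)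
    (A : Matrix (Fin n) (Fin n) ℝ) :
    ∑ i, ∑ j, A i j * X i j ≤ 2 * inftyOneNorm A := by
  have hconst : π / (2 * arsinh 1) ≤ 2 := by
    have hpi : π / 4 ≤ arsinh 1 := arctan_one ▸ arctan_le_arsinh zero_le_one
    rw [div_le_iff₀ (by linarith [pi_pos])]
    linarith
  exact (hX.sum_mul_le_inftyOneNorm A).trans
    (mul_le_mul_of_nonneg_right hconst (inftyOneNorm_nonneg A))

end Grothendieck

section ClusterMatrix

open Matrix

variable {ι κ : Type*} [Fintype κ]

/-- The Gram matrix of the vertices of a regular simplex with vertex set `κ`, centred at the origin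
and inscribed in the unit sphere. -/
noncomputable def simplexMatrix (κ : Type*) [Fintype κ] : Matrix κ κ ℝ :=
  of fun a b ↦ if a = b then 1 else -1 / ((Fintype.card κ : ℝ) - 1)

/-- The ideal solution for the clustering `c`: the Gram matrix of the vectors obtained by sending
every point of a cluster to the vertex of the regular simplex attached to that cluster. -/
noncomputable def clusterMatrix (c : ι → κ) : Matrix ι ι ℝ :=
  (simplexMatrix κ).submatrix c c

lemma posSemidef_card_smul_one_sub_of_one :
    ((Fintype.card κ : ℝ) • 1 - of fun _ _ ↦ 1 : Matrix κ κ ℝ).PosSemidef := by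
  refine .of_dotProduct_mulVec_nonneg ?_ fun z ↦ ?_
  · ext a b
    simp [one_apply, eq_comm]
  · have hquad : star z ⬝ᵥ (((Fintype.card κ : ℝ) • 1 - of fun _ _ ↦ 1 : Matrix κ κ ℝ) *ᵥ z) =
        Fintype.card κ * ∑ a, z a ^ 2 - (∑ a, z a) ^ 2 := by
      rw [sub_mulVec, smul_mulVec, one_mulVec, dotProduct_sub, dotProduct_smul]
      simp [dotProduct, mulVec, sq, Finset.sum_mul]
    rw [hquad]
    exact sub_nonneg.2 sq_sum_le_card_mul_sum_sq

lemma posSemidef_simplexMatrix (hκ : 1 < Fintype.card κ) : (simplexMatrix κ).PosSemidef := by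
  have hpos : (0 : ℝ) < (Fintype.card κ : ℝ) - 1 := sub_pos.2 (by exact_mod_cast hκ)
  convert (posSemidef_card_smul_one_sub_of_one (κ := κ)).smul (inv_pos.2 hpos).le using 1
  ext a b
  by_cases hab : a = b
  · simp [simplexMatrix, hab, hpos.ne']
  · simp [simplexMatrix, hab, div_eq_mul_inv]

lemma isCorrelationMatrix_clusterMatrix (hκ : 1 < Fintype.card κ) (c : ι → κ) :
    IsCorrelationMatrix (clusterMatrix c) where
  posSemidef := (posSemidef_simplexMatrix hκ).submatrix c
  diag_eq_one _ := if_pos rfl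

lemma sum_apply_nonneg_of_posSemidef [Fintype ι] {X : Matrix ι ι ℝ} (hX : X.PosSemidef) :
    0 ≤ ∑ i, ∑ j, X i j := by
  simpa [dotProduct, mulVec] using hX.dotProduct_mulVec_nonneg 1

lemma sq_card_div_le_sum_clusterMatrix_mul_self [Fintype ι] (hκ : 1 < Fintype.card κ) (c : ι → κ) :
    (Fintype.card ι : ℝ) ^ 2 / ((Fintype.card κ : ℝ) - 1) ≤
      ∑ i, ∑ j, clusterMatrix c i j * clusterMatrix c i j := by
  set r : ℝ := 1 / ((Fintype.card κ : ℝ) - 1)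
  have hcard : (1 : ℝ) ≤ (Fintype.card κ : ℝ) - 1 := by
    rw [le_sub_iff_add_le]
    exact_mod_cast hκ
  -- Both entries `1` and `-r` are roots of `p ^ 2 = (1 - r) * p + r`.
  have hroot (i j : ι) : clusterMatrix c i j * clusterMatrix c i j =
      (1 - r) * clusterMatrix c i j + r := by
    simp only [clusterMatrix, simplexMatrix, submatrix_apply, of_apply, neg_div]
    split_ifs <;> ring
  calc (Fintype.card ι : ℝ) ^ 2 / ((Fintype.card κ : ℝ) - 1)
      ≤ (1 - r) * ∑ i, ∑ j, clusterMatrix c i j + r * (Fintype.card ι : ℝ) ^ 2 := by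
        rw [div_eq_mul_one_div, mul_comm r]
        refine le_add_of_nonneg_left (mul_nonneg (sub_nonneg.2 ?_) ?_)
        · exact (div_le_one (by linarith)).2 hcard
        · exact sum_apply_nonneg_of_posSemidef
            (isCorrelationMatrix_clusterMatrix hκ c).posSemidef
    _ = ∑ i, ∑ j, clusterMatrix c i j * clusterMatrix c i j := by
        simp only [hroot, Finset.sum_add_distrib, Finset.mul_sum, Finset.sum_const,
          Finset.card_univ, nsmul_eq_mul]
        ring

end ClusterMatrix

section SemidefiniteProgram

variable {n : ℕ}

lemma sum_sub_smul_mul (A B X : Matrix (Fin n) (Fin n) ℝ) (t : ℝ) :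
    ∑ i, ∑ j, (A - t • B) i j * X i j =
      ∑ i, ∑ j, A i j * X i j - t * ∑ i, ∑ j, B i j * X i j := by
  simp only [Matrix.sub_apply, Matrix.smul_apply, smul_eq_mul, sub_mul, mul_assoc,
    Finset.sum_sub_distrib, Finset.mul_sum]

lemma sum_mul_self_sub_le_of_attains_sdpNorm {ε f : ℝ} (hε : 0 < ε)
    {P Q X : Matrix (Fin n) (Fin n) ℝ} (hP : IsCorrelationMatrix P) (hX : IsCorrelationMatrix X)
    (hQ : inftyOneNorm (Q - (2 * ε) • P) ≤ f)
    (hattain : ∑ i, ∑ j, Q i j * X i j = sdpNorm Q) :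
    ∑ i, ∑ j, P i j * P i j - 2 / ε * f ≤ ∑ i, ∑ j, P i j * X i j := by
  have hopt : ∑ i, ∑ j, Q i j * P i j ≤ ∑ i, ∑ j, Q i j * X i j :=
    hattain ▸ hP.sum_mul_le_sdpNorm Q
  have hboundX := hX.sum_mul_le_two_mul_inftyOneNorm (Q - (2 * ε) • P)
  have hboundP := hP.sum_mul_le_two_mul_inftyOneNorm (-(Q - (2 * ε) • P))
  rw [inftyOneNorm_neg] at hboundP
  simp only [Matrix.neg_apply, neg_mul, Finset.sum_neg_distrib] at hboundP
  rw [sum_sub_smul_mul] at hboundX hboundP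
  rw [sub_le_iff_le_add, ← sub_le_iff_le_add', div_mul_eq_mul_div, le_div_iff₀ hε]
  linarith

theorem stmt18_general {κ : Type*} [Fintype κ] (hκ : 1 < Fintype.card κ) (c : Fin n → κ)
    {ε f : ℝ} (hε : 0 < ε) {Q X : Matrix (Fin n) (Fin n) ℝ}
    (hQ : inftyOneNorm (Q - (2 * ε) • clusterMatrix c) ≤ f)
    (hXpsd : X.PosSemidef) (hXdiag : ∀ i, X i i = 1)
    (hXattain : ∑ i, ∑ j, Q i j * X i j = sdpNorm Q) :
    (n : ℝ) ^ 2 / ((Fintype.card κ : ℝ) - 1) - (2 / ε) * f ≤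
      ∑ i, ∑ j, clusterMatrix c i j * X i j := by
  have hnorm := sq_card_div_le_sum_clusterMatrix_mul_self hκ c
  rw [Fintype.card_fin] at hnorm
  have hmain := sum_mul_self_sub_le_of_attains_sdpNorm hε (isCorrelationMatrix_clusterMatrix hκ c)
    ⟨hXpsd, hXdiag⟩ hQ hXattain
  linarith

end SemidefiniteProgram

theorem stmt18 (n k : ℕ) (hk : 2 < k) (hdvd : k ∣ n)
    (ε f : ℝ) (hε : 0 < ε) (hf : 0 ≤ f)
    (c : Fin n → Fin k)
    (hc : ∀ j : Fin k, (Finset.univ.filter fun i => c i = j).card = n / k)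
    (P : Matrix (Fin n) (Fin n) ℝ)
    (hP : ∀ i j, P i j = if c i = c j then (1 : ℝ) else -1 / ((k : ℝ) - 1))
    (Q : Matrix (Fin n) (Fin n) ℝ) (hQsym : Q.IsSymm)
    (hQ : inftyOneNorm (Q - (2 * ε) • P) ≤ f)
    (X : Matrix (Fin n) (Fin n) ℝ)
    (hXpsd : X.PosSemidef)
    (hXdiag : ∀ i, X i i = 1)
    (hXattain : ∑ i, ∑ j, Q i j * X i j = sdpNorm Q) :
    (n : ℝ) ^ 2 / ((k : ℝ) - 1) - (2 / ε) * f ≤ ∑ i, ∑ j, P i j * X i j := by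
  obtain rfl : P = clusterMatrix c := by ext i j; simp [hP, clusterMatrix, simplexMatrix]
  simpa using stmt18_general (by simpa using one_lt_two.trans hk) c hε hQ hXpsd hXdiag hXattain
end
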